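/- (Mikusiński characterization of integrability.) Let (L, I) be an integral system on a set X. A function f : X → ℝ is I-integrable if and only if there exist sequences (f_n) and (φ_n) in L with |f_n| ≤ φ_n pointwise for every n, Σ_{n=1}^∞ I(φ_n) < ∞, and f(x) = Σ_{n=1}^∞ f_n(x) for every x ∈ X with Σ_{n=1}^∞ φ_n(x) < ∞. Moreover, in that case I¹(f) = Σ_{n=1}^∞ I(f_n) (the series converging absolutely). -/

import Mathlib

open Filter Topology

/-- An integral system on a set `X`: a linear lattice `L` of real-valued functions on `X`
(a vector subspace of `ℝ^X` closed under pointwise max and min) together with a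
preintegral `I` on it (a positive linear functional that is continuous in the sense that
`I fₙ → 0` whenever `fₙ ∈ L` are nonnegative and decrease pointwise to `0`). -/
structure IntegralSystem (X : Type*) where
  L : Set (X → ℝ)
  I : (X → ℝ) → ℝ
  zero_mem : (0 : X → ℝ) ∈ L
  add_mem : ∀ ⦃f g : X → ℝ⦄, f ∈ L → g ∈ L → f + g ∈ L
  smul_mem : ∀ (c : ℝ) ⦃f : X → ℝ⦄, f ∈ L → c • f ∈ L
  sup_mem : ∀ ⦃f g : X → ℝ⦄, f ∈ L → g ∈ L → f ⊔ g ∈ L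
  inf_mem : ∀ ⦃f g : X → ℝ⦄, f ∈ L → g ∈ L → f ⊓ g ∈ L
  I_add : ∀ ⦃f g : X → ℝ⦄, f ∈ L → g ∈ L → I (f + g) = I f + I g
  I_smul : ∀ (c : ℝ) ⦃f : X → ℝ⦄, f ∈ L → I (c • f) = c * I f
  I_pos : ∀ ⦃f : X → ℝ⦄, f ∈ L → (∀ x, 0 ≤ f x) → 0 ≤ I f
  I_cont : ∀ f : ℕ → X → ℝ, (∀ n, f n ∈ L) → (∀ n x, 0 ≤ f n x) →
    (∀ n x, f (n + 1) x ≤ f n x) →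
    (∀ x, Tendsto (fun n => f n x) atTop (𝓝 0)) →
    Tendsto (fun n => I (f n)) atTop (𝓝 0)

variable {X : Type*}

/-- `f : X → (−∞,∞]` belongs to `L_↑` iff some sequence in `L` increases pointwise to `f`. -/
def MemLup (S : IntegralSystem X) (f : X → EReal) : Prop :=
  ∃ g : ℕ → X → ℝ, (∀ n, g n ∈ S.L) ∧ (∀ n x, g n x ≤ g (n + 1) x) ∧
    ∀ x, Tendsto (fun n => ((g n x : EReal))) atTop (𝓝 (f x))

/-- For `f ∈ L_↑`, `I_↑ f = lim I (g n)` for any sequence `(g n)` in `L` increasing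
pointwise to `f`; the value does not depend on the chosen sequence, so we may define it as
the supremum of all such limits. -/
noncomputable def Iup (S : IntegralSystem X) (f : X → EReal) : EReal :=
  sSup { c : EReal | ∃ g : ℕ → X → ℝ, (∀ n, g n ∈ S.L) ∧ (∀ n x, g n x ≤ g (n + 1) x) ∧
    (∀ x, Tendsto (fun n => ((g n x : EReal))) atTop (𝓝 (f x))) ∧
    Tendsto (fun n => ((S.I (g n) : EReal))) atTop (𝓝 c) }

/-- `L_↓ = −L_↑`. -/
def MemLdown (S : IntegralSystem X) (f : X → EReal) : Prop :=
  MemLup S (fun x => -(f x))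

/-- `I_↓ f = −I_↑(−f)`. -/
noncomputable def Idown (S : IntegralSystem X) (f : X → EReal) : EReal :=
  -(Iup S (fun x => -(f x)))

/-- The upper integral `Ī f = inf { I_↑ g : g ∈ L_↑, f ≤ g }` (with `inf ∅ = ∞`). -/
noncomputable def upperInt (S : IntegralSystem X) (f : X → EReal) : EReal :=
  sInf (Iup S '' { g | MemLup S g ∧ ∀ x, f x ≤ g x })

/-- The lower integral `I̲ f = sup { I_↓ g : g ∈ L_↓, g ≤ f }` (with `sup ∅ = −∞`). -/
noncomputable def lowerInt (S : IntegralSystem X) (f : X → EReal) : EReal :=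
  sSup (Idown S '' { g | MemLdown S g ∧ ∀ x, g x ≤ f x })

/-- `f : X → ℝ` is `I`-integrable iff its lower and upper integrals coincide and are finite. -/
def Integrable1 (S : IntegralSystem X) (f : X → ℝ) : Prop :=
  ∃ c : ℝ, lowerInt S (fun x => ((f x : EReal))) = (c : EReal) ∧
    upperInt S (fun x => ((f x : EReal))) = (c : EReal)

/-- The Daniell extension `I¹` of `I`: the common value of the lower and upper integrals of
an integrable function. -/
noncomputable def Int1 (S : IntegralSystem X) (f : X → ℝ) : ℝ :=
  (upperInt S (fun x => ((f x : EReal)))).toReal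

namespace IntegralSystem

theorem neg_mem (S : IntegralSystem X) {f : X → ℝ} (hf : f ∈ S.L) : -f ∈ S.L := by
  have := S.smul_mem (-1) hf
  simpa using this

theorem sub_mem (S : IntegralSystem X) {f g : X → ℝ} (hf : f ∈ S.L) (hg : g ∈ S.L) :
    f - g ∈ S.L := by
  rw [sub_eq_add_neg]
  exact S.add_mem hf (S.neg_mem hg)

theorem I_neg (S : IntegralSystem X) {f : X → ℝ} (hf : f ∈ S.L) : S.I (-f) = - S.I f := by
  have := S.I_smul (-1) hf
  simpa using this

theorem I_sub (S : IntegralSystem X) {f g : X → ℝ} (hf : f ∈ S.L) (hg : g ∈ S.L) :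
    S.I (f - g) = S.I f - S.I g := by
  rw [sub_eq_add_neg, S.I_add hf (S.neg_mem hg), S.I_neg hg, sub_eq_add_neg]

theorem I_mono (S : IntegralSystem X) {f g : X → ℝ} (hf : f ∈ S.L) (hg : g ∈ S.L)
    (h : f ≤ g) : S.I f ≤ S.I g := by
  have := S.I_pos (S.sub_mem hg hf) (fun x => by simpa using h x)
  rw [S.I_sub hg hf] at this
  linarith

theorem I_zero (S : IntegralSystem X) : S.I 0 = 0 := by
  have := S.I_smul 0 S.zero_mem
  simpa using this

theorem abs_mem (S : IntegralSystem X) {f : X → ℝ} (hf : f ∈ S.L) : |f| ∈ S.L :=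
  S.sup_mem hf (S.neg_mem hf)

theorem sum_mem (S : IntegralSystem X) {f : ℕ → X → ℝ} (hf : ∀ n, f n ∈ S.L)
    (s : Finset ℕ) : ∑ i ∈ s, f i ∈ S.L := by
  classical
  induction s using Finset.induction_on with
  | empty => simpa using S.zero_mem
  | insert a s ha ih => rw [Finset.sum_insert ha]; exact S.add_mem (hf a) ih

theorem I_sum (S : IntegralSystem X) {f : ℕ → X → ℝ} (hf : ∀ n, f n ∈ S.L)
    (s : Finset ℕ) : S.I (∑ i ∈ s, f i) = ∑ i ∈ s, S.I (f i) := by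
  classical
  induction s using Finset.induction_on with
  | empty => simpa using S.I_zero
  | insert a s ha ih =>
    rw [Finset.sum_insert ha, Finset.sum_insert ha, S.I_add (hf a) (S.sum_mem hf s), ih]

/-- The sequence `u` eventually exceeds `h` up to any positive error, pointwise. -/
def Dom (u : ℕ → X → ℝ) (h : X → ℝ) : Prop :=
  ∀ x, ∀ δ : ℝ, 0 < δ → ∃ n, h x - δ < u n x

theorem key (S : IntegralSystem X) {u : X → ℝ} (hu : u ∈ S.L) {g : ℕ → X → ℝ}
    (hg : ∀ n, g n ∈ S.L) (hm : Monotone g) (hd : Dom g u) {C : ℝ}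
    (hC : ∀ n, S.I (g n) ≤ C) : S.I u ≤ C := by
  have hmem : ∀ n, (u - g n) ⊔ 0 ∈ S.L := fun n => S.sup_mem (S.sub_mem hu (hg n)) S.zero_mem
  have h := S.I_cont (fun n => (u - g n) ⊔ 0) hmem (fun n x => by simp)
    (fun n x => by
      have := hm (Nat.le_succ n) x
      simp only [Pi.sup_apply, Pi.sub_apply, Pi.zero_apply]
      exact sup_le_sup_right (by simp only [Nat.succ_eq_add_one] at this; linarith) _)
    (fun x => by
      rw [Metric.tendsto_atTop]
      intro ε hε
      obtain ⟨n, hn⟩ := hd x ε hε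
      refine ⟨n, fun m hmn => ?_⟩
      have := hm hmn x
      simp only [Pi.sup_apply, Pi.sub_apply, Pi.zero_apply, Real.dist_eq, sub_zero]
      rw [abs_of_nonneg (le_max_right _ _)]
      exact max_lt (by linarith) hε)
  have h2 : ∀ n, S.I u - C ≤ S.I ((u - g n) ⊔ 0) := fun n => by
    have h3 := S.I_mono (S.sub_mem hu (hg n)) (hmem n) le_sup_left
    rw [S.I_sub hu (hg n)] at h3
    linarith [hC n]
  have := ge_of_tendsto' h h2
  linarith

theorem upper_le (S : IntegralSystem X) {f : X → ℝ} {g : ℕ → X → ℝ}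
    (hg : ∀ n, g n ∈ S.L) (hm : Monotone g) (hd : Dom g f) {C : ℝ}
    (hC : ∀ n, S.I (g n) ≤ C) : upperInt S (fun x => ((f x : EReal))) ≤ C := by
  have hmE : ∀ x, Monotone (fun n => ((g n x : EReal))) := fun x a b hab =>
    EReal.coe_le_coe_iff.2 (hm hab x)
  have hlim : ∀ x, Tendsto (fun n => ((g n x : EReal))) atTop (𝓝 (⨆ n, (g n x : EReal))) :=
    fun x => tendsto_atTop_iSup (hmE x)
  have hup : Iup S (fun x => ⨆ n, (g n x : EReal)) ≤ C := by
    refine sSup_le ?_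
    rintro c ⟨v, hv, hvm, hvt, hc⟩
    refine le_of_tendsto' hc fun n => EReal.coe_le_coe_iff.2 ?_
    refine S.key (hv n) hg hm (fun x δ hδ => ?_) hC
    have hvmon : Monotone (fun n => ((v n x : EReal))) :=
      monotone_nat_of_le_succ fun k => EReal.coe_le_coe_iff.2 (hvm k x)
    have h1 : ((v n x - δ : ℝ) : EReal) < ⨆ n, (g n x : EReal) :=
      lt_of_lt_of_le (EReal.coe_lt_coe_iff.2 (by linarith)) (hvmon.ge_of_tendsto (hvt x) n)
    obtain ⟨m, hm'⟩ := lt_iSup_iff.1 h1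
    exact ⟨m, EReal.coe_lt_coe_iff.1 hm'⟩
  refine le_trans (sInf_le ⟨_, ⟨⟨g, hg, fun n x => hm (Nat.le_succ n) x, hlim⟩, ?_⟩, rfl⟩) hup
  intro x
  refine EReal.le_of_forall_lt_iff_le.1 ?_ |> fun h => h
  intro z hz
  by_contra hcon
  push Not at hcon
  obtain ⟨y, hy1, hy2⟩ := EReal.lt_iff_exists_real_btwn.1 hcon
  have hfx : y < f x := EReal.coe_lt_coe_iff.1 hy2
  obtain ⟨n, hn⟩ := hd x (f x - y) (by linarith)
  have : (g n x : EReal) ≤ ⨆ n, (g n x : EReal) := le_iSup (fun n => (g n x : EReal)) n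
  have h2 : (y : EReal) < g n x := EReal.coe_lt_coe_iff.2 (by linarith)
  exact absurd (h2.trans_le this) (not_lt.2 (hz.le.trans hy1.le))

theorem exists_of_upper_lt (S : IntegralSystem X) {f : X → ℝ} {C : ℝ}
    (h : upperInt S (fun x => ((f x : EReal))) < C) :
    ∃ g : ℕ → X → ℝ, (∀ n, g n ∈ S.L) ∧ Monotone g ∧ Dom g f ∧ ∀ n, S.I (g n) ≤ C := by
  obtain ⟨_, ⟨G, ⟨⟨g, hg, hgm, hgt⟩, hfG⟩, rfl⟩, hlt⟩ := sInf_lt_iff.1 h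
  have hm : Monotone g := monotone_nat_of_le_succ fun n x => hgm n x
  refine ⟨g, hg, hm, fun x δ hδ => ?_, fun n => ?_⟩
  · have h1 : ((f x - δ : ℝ) : EReal) < G x :=
      lt_of_lt_of_le (EReal.coe_lt_coe_iff.2 (by linarith)) (hfG x)
    obtain ⟨n, hn⟩ := ((hgt x).eventually (lt_mem_nhds h1)).exists
    exact ⟨n, EReal.coe_lt_coe_iff.1 hn⟩
  · have hIm : Monotone (fun n => ((S.I (g n) : EReal))) := fun a b hab =>
      EReal.coe_le_coe_iff.2 (S.I_mono (hg a) (hg b) (hm hab))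
    have h1 : (S.I (g n) : EReal) ≤ ⨆ n, (S.I (g n) : EReal) :=
      le_iSup (fun n => (S.I (g n) : EReal)) n
    have h2 : (⨆ n, (S.I (g n) : EReal)) ≤ Iup S G :=
      le_sSup ⟨g, hg, hgm, hgt, tendsto_atTop_iSup hIm⟩
    exact EReal.coe_le_coe_iff.1 ((h1.trans h2).trans hlt.le)

theorem lower_eq (S : IntegralSystem X) (f : X → ℝ) :
    lowerInt S (fun x => ((f x : EReal))) =
      - upperInt S (fun x => (((-f) x : ℝ) : EReal)) := by
  apply le_antisymm
  · refine sSup_le ?_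
    rintro _ ⟨g, ⟨hg, hgf⟩, rfl⟩
    unfold Idown
    rw [EReal.neg_le_neg_iff]
    refine sInf_le ⟨_, ⟨hg, fun x => ?_⟩, rfl⟩
    simp only [Pi.neg_apply, EReal.coe_neg]
    exact EReal.neg_le_neg_iff.2 (hgf x)
  · rw [EReal.neg_le]
    refine le_sInf ?_
    rintro _ ⟨g, ⟨hg, hgf⟩, rfl⟩
    rw [EReal.neg_le]
    have hgg : (fun x => -(-(g x))) = g := by funext x; simp
    refine le_sSup ⟨fun x => - g x, ⟨?_, fun x => ?_⟩, ?_⟩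
    · unfold MemLdown
      rwa [hgg]
    · have := hgf x
      simp only [Pi.neg_apply, EReal.coe_neg] at this
      exact EReal.neg_le.1 this
    · unfold Idown
      rw [hgg]

theorem dom_add {u v : ℕ → X → ℝ} {f g : X → ℝ} (hu : Monotone u) (hv : Monotone v)
    (hf : Dom u f) (hg : Dom v g) : Dom (u + v) (f + g) := by
  intro x δ hδ
  obtain ⟨n, hn⟩ := hf x (δ / 2) (by linarith)
  obtain ⟨m, hm⟩ := hg x (δ / 2) (by linarith)
  refine ⟨max n m, ?_⟩
  have h1 := hu (le_max_left n m) x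
  have h2 := hv (le_max_right n m) x
  simp only [Pi.add_apply]
  linarith

theorem upper_add_nonneg (S : IntegralSystem X) {f : X → ℝ} {C D : ℝ}
    (h : upperInt S (fun x => ((f x : EReal))) < C)
    (h' : upperInt S (fun x => (((-f) x : ℝ) : EReal)) < D) : 0 ≤ C + D := by
  obtain ⟨u, hu, hum, hud, huI⟩ := S.exists_of_upper_lt h
  obtain ⟨v, hv, hvm, hvd, hvI⟩ := S.exists_of_upper_lt h'
  have hd := dom_add hum hvm hud hvd
  rw [add_neg_cancel] at hd
  have := S.key S.zero_mem (fun n => S.add_mem (hu n) (hv n)) (hum.add hvm) hd (C := C + D)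
    (fun n => by rw [S.I_add (hu n) (hv n)]; linarith [huI n, hvI n])
  rwa [S.I_zero] at this

/-- Upper estimate for a function represented by a series. -/
theorem upper_le_series (S : IntegralSystem X) (f : X → ℝ) (fn φn : ℕ → X → ℝ)
    (hf : ∀ n, fn n ∈ S.L) (hφ : ∀ n, φn n ∈ S.L) (hle : ∀ n x, |fn n x| ≤ φn n x)
    (hs : Summable (fun n => S.I (φn n)))
    (hsum : ∀ x, Summable (fun n => φn n x) → HasSum (fun n => fn n x) (f x))
    {s : ℝ} (hI : HasSum (fun n => S.I (fn n)) s) :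
    upperInt S (fun x => ((f x : EReal))) ≤ s := by
  have hφ0 : ∀ n x, 0 ≤ φn n x := fun n x => (abs_nonneg _).trans (hle n x)
  have hIφ0 : ∀ n, 0 ≤ S.I (φn n) := fun n => S.I_pos (hφ n) (hφ0 n)
  have main : ∀ N, upperInt S (fun x => ((f x : EReal))) ≤
      ((∑ i ∈ Finset.range N, S.I (fn i) + ∑' i, S.I (φn (i + N)) : ℝ) : EReal) := by
    intro N
    refine S.upper_le (g := fun m => ∑ i ∈ Finset.range N, fn i +
      ∑ i ∈ Finset.range m, φn (i + N)) (fun m => S.add_mem (S.sum_mem hf _)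
        (S.sum_mem (fun i => hφ (i + N)) _)) ?_ ?_ ?_
    · refine monotone_nat_of_le_succ fun n x => ?_
      simp only [Finset.sum_range_succ, Pi.add_apply]
      linarith [hφ0 (n + N) x]
    · intro x δ hδ
      simp only [Pi.add_apply, Finset.sum_apply]
      by_cases hx : Summable (fun n => φn n x)
      · have h1 := hsum x hx
        have h2 : Tendsto (fun m => ∑ i ∈ Finset.range (m + N), fn i x) atTop (𝓝 (f x)) :=
          (tendsto_add_atTop_iff_nat N).2 h1.tendsto_sum_nat
        obtain ⟨m, hm⟩ := (h2.eventually (lt_mem_nhds (sub_lt_self (f x) hδ))).exists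
        refine ⟨m, hm.trans_le ?_⟩
        rw [add_comm m N, Finset.sum_range_add]
        gcongr with i hi
        rw [add_comm N i]
        exact (le_abs_self _).trans (hle _ x)
      · have hx' : ¬ Summable (fun n => φn (n + N) x) := by
          rwa [summable_nat_add_iff (f := fun n => φn n x) N]
        have := (not_summable_iff_tendsto_nat_atTop_of_nonneg (fun n => hφ0 (n + N) x)).1 hx'
        obtain ⟨m, hm⟩ := (this.eventually
          (eventually_gt_atTop (f x - δ - ∑ i ∈ Finset.range N, fn i x))).exists
        exact ⟨m, by linarith⟩
    · intro m
      rw [S.I_add (S.sum_mem hf _) (S.sum_mem (fun i => hφ (i + N)) _), S.I_sum hf,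
        S.I_sum (fun i => hφ (i + N))]
      gcongr
      exact ((summable_nat_add_iff (f := fun n => S.I (φn n)) N).2 hs).sum_le_tsum _
        (fun i _ => hIφ0 _)
  have ht : Tendsto (fun N => ∑ i ∈ Finset.range N, S.I (fn i) + ∑' i, S.I (φn (i + N)))
      atTop (𝓝 (s + 0)) :=
    hI.tendsto_sum_nat.add (tendsto_sum_nat_add fun n => S.I (φn n))
  rw [add_zero] at ht
  exact ge_of_tendsto' ((continuous_coe_real_ereal.tendsto s).comp ht) main

theorem abs_I_le (S : IntegralSystem X) {f φ : X → ℝ} (hf : f ∈ S.L) (hφ : φ ∈ S.L)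
    (h : ∀ x, |f x| ≤ φ x) : |S.I f| ≤ S.I φ := by
  rw [abs_le]
  constructor
  · have := S.I_mono (S.neg_mem hf) hφ (fun x => (neg_le_abs _).trans (h x))
    rw [S.I_neg hf] at this
    linarith
  · exact S.I_mono hf hφ (fun x => (le_abs_self _).trans (h x))

theorem series_integrable (S : IntegralSystem X) (f : X → ℝ) (fn φn : ℕ → X → ℝ)
    (hf : ∀ n, fn n ∈ S.L) (hφ : ∀ n, φn n ∈ S.L) (hle : ∀ n x, |fn n x| ≤ φn n x)
    (hs : Summable (fun n => S.I (φn n)))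
    (hsum : ∀ x, Summable (fun n => φn n x) → HasSum (fun n => fn n x) (f x)) :
    Summable (fun n => |S.I (fn n)|) ∧ ∃ s : ℝ, HasSum (fun n => S.I (fn n)) s ∧
      upperInt S (fun x => ((f x : EReal))) = s ∧
      lowerInt S (fun x => ((f x : EReal))) = s := by
  have habs : Summable (fun n => |S.I (fn n)|) :=
    Summable.of_nonneg_of_le (fun _ => abs_nonneg _)
      (fun n => S.abs_I_le (hf n) (hφ n) (hle n)) hs
  refine ⟨habs, ∑' n, S.I (fn n), habs.of_abs.hasSum, ?_⟩
  set s := ∑' n, S.I (fn n) with hsdef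
  have hI : HasSum (fun n => S.I (fn n)) s := habs.of_abs.hasSum
  have hU : upperInt S (fun x => ((f x : EReal))) ≤ s :=
    S.upper_le_series f fn φn hf hφ hle hs hsum hI
  have hV : upperInt S (fun x => (((-f) x : ℝ) : EReal)) ≤ ((-s : ℝ) : EReal) := by
    refine S.upper_le_series (-f) (fun n => - fn n) φn (fun n => S.neg_mem (hf n)) hφ
      (fun n x => by simpa using hle n x) hs (fun x hx => (hsum x hx).neg) ?_
    simp only [fun n => S.I_neg (hf n)]
    exact hI.neg
  have hU' : (s : EReal) ≤ upperInt S (fun x => ((f x : EReal))) := by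
    by_contra hcon
    push Not at hcon
    obtain ⟨C, h1, h2⟩ := EReal.lt_iff_exists_real_btwn.1 hcon
    have h3 : C < s := EReal.coe_lt_coe_iff.1 h2
    have := S.upper_add_nonneg h1 (D := -((C + s) / 2))
      (hV.trans_lt (EReal.coe_lt_coe_iff.2 (by linarith)))
    linarith
  have hV' : ((-s : ℝ) : EReal) ≤ upperInt S (fun x => (((-f) x : ℝ) : EReal)) := by
    by_contra hcon
    push Not at hcon
    obtain ⟨C, h1, h2⟩ := EReal.lt_iff_exists_real_btwn.1 hcon
    have h3 : C < -s := EReal.coe_lt_coe_iff.1 h2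
    have := S.upper_add_nonneg (C := (s - C) / 2)
      (hU.trans_lt (EReal.coe_lt_coe_iff.2 (by linarith))) h1
    linarith
  refine ⟨le_antisymm hU hU', ?_⟩
  rw [S.lower_eq, le_antisymm hV hV', EReal.coe_neg, neg_neg]

/-- Successive differences. -/
def dif {E : Type*} [Sub E] (a : ℕ → E) : ℕ → E
  | 0 => a 0
  | n + 1 => a (n + 1) - a n

theorem sum_dif (a : ℕ → ℝ) (n : ℕ) : ∑ i ∈ Finset.range (n + 1), dif a i = a n := by
  induction n with
  | zero => simp [dif]
  | succ n ih => rw [Finset.sum_range_succ, ih]; simp [dif]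

theorem dif_apply (a : ℕ → X → ℝ) (n : ℕ) (x : X) : dif a n x = dif (fun k => a k x) n := by
  cases n <;> rfl

theorem dif_mem (S : IntegralSystem X) {a : ℕ → X → ℝ} (ha : ∀ n, a n ∈ S.L) (n : ℕ) :
    dif a n ∈ S.L := by
  cases n with
  | zero => exact ha 0
  | succ n => exact S.sub_mem (ha _) (ha _)

theorem I_dif (S : IntegralSystem X) {a : ℕ → X → ℝ} (ha : ∀ n, a n ∈ S.L) (n : ℕ) :
    S.I (dif a n) = dif (fun k => S.I (a k)) n := by
  cases n with
  | zero => rfl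
  | succ n => exact S.I_sub (ha _) (ha _)

theorem dif_nonneg {a : ℕ → ℝ} (ha : Monotone a) (h0 : 0 ≤ a 0) (n : ℕ) : 0 ≤ dif a n := by
  cases n with
  | zero => exact h0
  | succ n => exact sub_nonneg.2 (ha (Nat.le_succ n))

/-- One approximation step. -/
theorem approx (S : IntegralSystem X) {f : X → ℝ} {c : ℝ}
    (hl : lowerInt S (fun x => ((f x : EReal))) = (c : EReal))
    (hu : upperInt S (fun x => ((f x : EReal))) = (c : EReal)) {ε : ℝ} (hε : 0 < ε) :
    ∃ (u : X → ℝ) (W : ℕ → X → ℝ), u ∈ S.L ∧ (∀ m, W m ∈ S.L) ∧ Monotone W ∧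
      (∀ m, 0 ≤ W m) ∧ Dom W |f - u| ∧ ∀ m, S.I (W m) ≤ 4 * ε := by
  rw [S.lower_eq, neg_eq_iff_eq_neg, ← EReal.coe_neg] at hl
  obtain ⟨U, hUL, hUm, hUd, hUI⟩ := S.exists_of_upper_lt (f := f) (C := c + ε)
    (by rw [hu]; exact EReal.coe_lt_coe_iff.2 (by linarith))
  obtain ⟨V, hVL, hVm, hVd, hVI⟩ := S.exists_of_upper_lt (f := -f) (C := -c + ε)
    (by rw [hl]; exact EReal.coe_lt_coe_iff.2 (by linarith))
  have hex : ∃ m, c - ε < S.I (U m) := by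
    by_contra hcon
    push Not at hcon
    have := S.upper_le hUL hUm hUd hcon
    rw [hu] at this
    have := EReal.coe_le_coe_iff.1 this
    linarith
  obtain ⟨m₀, hm₀⟩ := hex
  set u := U m₀ with hudef
  let W : ℕ → X → ℝ := fun m => (U m + U m) + V m - u
  have hWL : ∀ m, W m ∈ S.L := fun m =>
    S.sub_mem (S.add_mem (S.add_mem (hUL m) (hUL m)) (hVL m)) (hUL m₀)
  have hWm : Monotone W := fun a b hab x => by
    have h1 := hUm hab x
    have h2 := hVm hab x
    simp only [W, Pi.add_apply, Pi.sub_apply]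
    linarith
  have hWI : ∀ m, S.I (W m) ≤ 4 * ε := fun m => by
    simp only [W]
    rw [S.I_sub (S.add_mem (S.add_mem (hUL m) (hUL m)) (hVL m)) (hUL m₀),
      S.I_add (S.add_mem (hUL m) (hUL m)) (hVL m), S.I_add (hUL m) (hUL m)]
    linarith [hUI m, hVI m]
  have hWd : Dom W |f - u| := fun x δ hδ => by
    obtain ⟨n, hn⟩ := hUd x (δ / 3) (by linarith)
    obtain ⟨m, hm⟩ := hVd x (δ / 3) (by linarith)
    let k := max (max n m) m₀
    have h1 : U n x ≤ U k x := hUm ((le_max_left n m).trans (le_max_left _ _)) x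
    have h2 : V m x ≤ V k x := hVm ((le_max_right n m).trans (le_max_left _ _)) x
    have h3 : u x ≤ U k x := hUm (le_max_right _ _) x
    refine ⟨k, ?_⟩
    simp only [W, Pi.add_apply, Pi.sub_apply, Pi.abs_apply, Pi.neg_apply] at *
    rw [sub_lt_iff_lt_add, abs_lt]
    constructor <;> linarith
  refine ⟨u, fun m => W m ⊔ 0, hUL m₀, fun m => S.sup_mem (hWL m) S.zero_mem,
    fun a b hab => sup_le_sup_right (hWm hab) 0, fun m => le_sup_right,
    fun x δ hδ => ?_, fun m => ?_⟩
  · obtain ⟨n, hn⟩ := hWd x δ hδ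
    exact ⟨n, hn.trans_le (le_max_left _ _)⟩
  · refine S.key (S.sup_mem (hWL m) S.zero_mem) hWL hWm (fun x δ hδ => ?_) hWI
    obtain ⟨n, hn⟩ := hWd x δ hδ
    refine ⟨max n m, ?_⟩
    have h1 := hWm (le_max_left n m) x
    have h2 := hWm (le_max_right n m) x
    have h3 : 0 ≤ |f - u| x := abs_nonneg _
    simp only [Pi.sup_apply, Pi.zero_apply]
    rw [sub_lt_iff_lt_add]
    exact max_lt (by linarith) (by linarith)

theorem exists_series (S : IntegralSystem X) {f : X → ℝ} (hf : Integrable1 S f) :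
    ∃ fn φn : ℕ → X → ℝ, (∀ n, fn n ∈ S.L) ∧ (∀ n, φn n ∈ S.L) ∧
        (∀ n x, |fn n x| ≤ φn n x) ∧ Summable (fun n => S.I (φn n)) ∧
        (∀ x, Summable (fun n => φn n x) → HasSum (fun n => fn n x) (f x)) := by
  obtain ⟨c, hl, hu⟩ := hf
  choose u W huL hWL hWm hW0 hWd hWI using
    fun k : ℕ => S.approx hl hu (ε := (1 / 2 : ℝ) ^ k) (by positivity)
  have hgeo : Summable (fun k : ℕ => (1 / 2 : ℝ) ^ k) := summable_geometric_two
  -- the nonnegative pieces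
  let p : ℕ → ℕ → X → ℝ := fun k => dif (W k)
  have hpL : ∀ k m, p k m ∈ S.L := fun k m => S.dif_mem (hWL k) m
  have hp0 : ∀ k m x, 0 ≤ p k m x := fun k m x => by
    simp only [p]
    rw [dif_apply]
    exact dif_nonneg (fun a b hab => hWm k hab x) (hW0 k 0 x) m
  have hIp0 : ∀ k m, 0 ≤ S.I (p k m) := fun k m => S.I_pos (hpL k m) (hp0 k m)
  have hpsum : ∀ k m, ∑ i ∈ Finset.range m, S.I (p k i) ≤ 4 * (1 / 2 : ℝ) ^ k := by
    intro k m
    calc _ ≤ ∑ i ∈ Finset.range (m + 1), S.I (p k i) :=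
          Finset.sum_le_sum_of_subset_of_nonneg (Finset.range_mono (Nat.le_succ m))
            (fun i _ _ => hIp0 k i)
      _ = S.I (W k m) := by
          simp only [p, S.I_dif (hWL k)]
          exact sum_dif (fun i => S.I (W k i)) m
      _ ≤ _ := hWI k m
  have hIpS : Summable (fun q : ℕ × ℕ => S.I (p q.1 q.2)) := by
    rw [summable_prod_of_nonneg (fun q => hIp0 q.1 q.2)]
    refine ⟨fun k => summable_of_sum_range_le (hIp0 k) (hpsum k), ?_⟩
    refine Summable.of_nonneg_of_le (fun k => tsum_nonneg (hIp0 k))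
      (fun k => Real.tsum_le_of_sum_range_le (hIp0 k) (hpsum k)) (hgeo.mul_left 4)
  -- the main terms
  have hfL : ∀ n, dif u n ∈ S.L := S.dif_mem huL
  have hfI : Summable (fun n => S.I |dif u n|) := by
    rw [← summable_nat_add_iff 1]
    refine Summable.of_nonneg_of_le
      (fun n => S.I_pos (S.abs_mem (hfL _)) (fun x => abs_nonneg _)) (fun n => ?_)
      ((hgeo.mul_left 4).add (((summable_nat_add_iff 1).2 hgeo).mul_left 4))
    refine S.key (S.abs_mem (hfL _)) (g := W n + W (n + 1))
      (fun m => S.add_mem (hWL n m) (hWL (n + 1) m)) ((hWm n).add (hWm (n + 1)))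
      (fun x δ hδ => ?_) (fun m => ?_)
    · obtain ⟨m, hm⟩ := dom_add (hWm n) (hWm (n + 1)) (hWd n) (hWd (n + 1)) x δ hδ
      refine ⟨m, lt_of_le_of_lt ?_ hm⟩
      have : |u (n + 1) x - u n x| ≤ |f x - u n x| + |f x - u (n + 1) x| := by
        have h := abs_sub_le (u (n + 1) x) (f x) (u n x)
        rw [abs_sub_comm (u (n + 1) x) (f x)] at h
        linarith
      simpa [dif] using this
    · rw [Pi.add_apply, S.I_add (hWL n m) (hWL (n + 1) m)]
      exact add_le_add (hWI n m) (hWI (n + 1) m)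
  refine ⟨dif u, fun n => |dif u n| + p n.unpair.1 n.unpair.2, hfL,
    fun n => S.add_mem (S.abs_mem (hfL n)) (hpL _ _), fun n x => ?_, ?_, fun x hx => ?_⟩
  · have := hp0 n.unpair.1 n.unpair.2 x
    simp only [Pi.add_apply, Pi.abs_apply]
    linarith
  · simp only [fun n => S.I_add (S.abs_mem (hfL n)) (hpL (Nat.unpair n).1 (Nat.unpair n).2)]
    refine hfI.add ?_
    exact (Nat.pairEquiv.symm.summable_iff (f := fun q : ℕ × ℕ => S.I (p q.1 q.2))).2 hIpS
  · have h1 : Summable (fun n => |dif u n x|) :=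
      Summable.of_nonneg_of_le (fun n => abs_nonneg _) (fun n => by
        have := hp0 n.unpair.1 n.unpair.2 x
        simp only [Pi.add_apply, Pi.abs_apply]
        linarith) hx
    have h2 : Summable (fun n : ℕ => p n.unpair.1 n.unpair.2 x) :=
      Summable.of_nonneg_of_le (fun n => hp0 _ _ x) (fun n => by
        have := abs_nonneg (dif u n x)
        simp only [Pi.add_apply, Pi.abs_apply]
        linarith) hx
    have h3 : Summable (fun q : ℕ × ℕ => p q.1 q.2 x) :=
      (Nat.pairEquiv.symm.summable_iff (f := fun q : ℕ × ℕ => p q.1 q.2 x)).1 h2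
    rw [summable_prod_of_nonneg (fun q => hp0 q.1 q.2 x)] at h3
    obtain ⟨h4, h5⟩ := h3
    have h6 := h5.tendsto_atTop_zero
    have h7 : ∀ k, |u k x - f x| ≤ ∑' m, p k m x := by
      intro k
      refine le_of_forall_pos_le_add fun δ hδ => ?_
      obtain ⟨m, hm⟩ := hWd k x δ hδ
      have h8 : W k m x ≤ ∑' m, p k m x := by
        have h9 := (h4 k).sum_le_tsum (Finset.range (m + 1)) (fun i _ => hp0 k i x)
        have h10 : ∑ i ∈ Finset.range (m + 1), p k i x = W k m x := by
          simp only [p, dif_apply]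
          exact sum_dif (fun i => W k i x) m
        rw [h10] at h9
        exact h9
      simp only [Pi.abs_apply, Pi.sub_apply] at hm
      rw [abs_sub_comm]
      linarith
    have h8 : Tendsto (fun k => u k x) atTop (𝓝 (f x)) := by
      rw [tendsto_iff_dist_tendsto_zero]
      exact squeeze_zero (fun _ => dist_nonneg) h7 h6
    have h9 := h1.of_abs.hasSum
    have h10 := (tendsto_add_atTop_iff_nat 1).2 h9.tendsto_sum_nat
    have h11 : (fun n => ∑ i ∈ Finset.range (n + 1), dif u i x) = fun n => u n x := by
      funext n
      simp only [dif_apply]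
      exact sum_dif (fun i => u i x) n
    rw [h11] at h10
    rwa [tendsto_nhds_unique h10 h8] at h9

end IntegralSystem

/-- Mikusiński's characterization of integrability: `f : X → ℝ` is `I`-integrable iff
there are sequences `(fn)` and `(φn)` in `L` with `|fn n| ≤ φn n` pointwise,
`Σ_n I (φn n) < ∞`, and `f x = Σ_n fn n x` at every point `x` where `Σ_n φn n x < ∞`;
and in that case `I¹ f = Σ_n I (fn n)`, the series converging absolutely. -/
theorem mikusinski_characterization (S : IntegralSystem X) (f : X → ℝ) :
    (Integrable1 S f ↔
      ∃ fn φn : ℕ → X → ℝ, (∀ n, fn n ∈ S.L) ∧ (∀ n, φn n ∈ S.L) ∧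
        (∀ n x, |fn n x| ≤ φn n x) ∧ Summable (fun n => S.I (φn n)) ∧
        (∀ x, Summable (fun n => φn n x) → HasSum (fun n => fn n x) (f x))) ∧
    (∀ fn φn : ℕ → X → ℝ, (∀ n, fn n ∈ S.L) → (∀ n, φn n ∈ S.L) →
      (∀ n x, |fn n x| ≤ φn n x) → Summable (fun n => S.I (φn n)) →
      (∀ x, Summable (fun n => φn n x) → HasSum (fun n => fn n x) (f x)) →
      Summable (fun n => |S.I (fn n)|) ∧ HasSum (fun n => S.I (fn n)) (Int1 S f)) := by
  refine ⟨⟨fun h => S.exists_series h, ?_⟩, ?_⟩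
  · rintro ⟨fn, φn, hf, hφ, hle, hs, hsum⟩
    obtain ⟨_, s, _, hU, hL⟩ := S.series_integrable f fn φn hf hφ hle hs hsum
    exact ⟨s, hL, hU⟩
  · intro fn φn hf hφ hle hs hsum
    obtain ⟨habs, s, hI, hU, _⟩ := S.series_integrable f fn φn hf hφ hle hs hsum
    refine ⟨habs, ?_⟩
    unfold Int1
    rw [hU, EReal.toReal_coe]
    exact hI
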